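/- Let X be a normed space, f : X → ℝ ∪ {−∞, +∞} a function, and u ∈ X a point with f(u) ∈ ℝ. Then: (a) the weak slope |df|(u) is finite if and only if the subdifferential ∂f(u) is nonempty; (b) if |df|(u) < +∞, then |df|(u) ≥ min{‖α‖_{X*} : α ∈ ∂f(u)}. -/

import Mathlib

open Set ENNReal

noncomputable section

/-- Ball-intersect-epigraph of `f` around `(u, c)` of radius `σ`, in the metric
`dist((w,μ),(w',μ')) = sqrt(dist(w,w')² + (μ-μ')²)` on `E × ℝ`. -/
def epiBallM {E : Type*} [MetricSpace E] (f : E → EReal) (u : E) (c σ : ℝ) : Set (E × ℝ) :=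
  {w | Real.sqrt ((dist w.1 u) ^ 2 + (w.2 - c) ^ 2) < σ ∧ f w.1 ≤ (w.2 : EReal)}

/-- `u` (with `f u = c ∈ ℝ`) is `δ`-regular for `f`. -/
def IsDeltaRegular {E : Type*} [MetricSpace E] (f : E → EReal) (u : E) (c : ℝ) (δ : ℝ) : Prop :=
  ∃ σ > 0, ∃ ν : E × ℝ → ℝ → E,
    ContinuousOn (fun z : (E × ℝ) × ℝ => ν z.1 z.2) (epiBallM f u c σ ×ˢ Icc 0 σ) ∧
    ∀ w ∈ epiBallM f u c σ, ∀ t ∈ Icc (0:ℝ) σ,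
      dist (ν w t) w.1 ≤ t ∧ f (ν w t) ≤ ((w.2 - δ * t : ℝ) : EReal)

/-- The weak slope `|df|(u)`, an element of `[0,∞]`. -/
def weakSlope {E : Type*} [MetricSpace E] (f : E → EReal) (u : E) (c : ℝ) : ℝ≥0∞ :=
  sSup {d : ℝ≥0∞ | ∃ δ : ℝ, 0 < δ ∧ IsDeltaRegular f u c δ ∧ d = ENNReal.ofReal δ}

variable {X : Type*} [NormedAddCommGroup X] [NormedSpace ℝ X]

/-- The set of `r ∈ ℝ` entering the definition of `f⁰_ε(u;v)`. -/
def gdirSetN (f : X → EReal) (u : X) (c : ℝ) (v : X) (ε : ℝ) : Set ℝ :=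
  {r | ∃ δ > 0, ∃ ν : X × ℝ → ℝ → X,
    ContinuousOn (fun z : (X × ℝ) × ℝ => ν z.1 z.2) (epiBallM f u c δ ×ˢ Ioc 0 δ) ∧
    ∀ w ∈ epiBallM f u c δ, ∀ t ∈ Ioc (0:ℝ) δ,
      ‖ν w t - v‖ < ε ∧ f (w.1 + t • ν w t) ≤ ((w.2 + r * t : ℝ) : EReal)}

/-- `f⁰_ε(u;v)`. -/
def gdirEps (f : X → EReal) (u : X) (c : ℝ) (v : X) (ε : ℝ) : EReal :=
  sInf ((fun r : ℝ => (r : EReal)) '' gdirSetN f u c v ε)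

/-- `f⁰(u;v) = sup_{ε>0} f⁰_ε(u;v)`. -/
def gdir (f : X → EReal) (u : X) (c : ℝ) (v : X) : EReal :=
  ⨆ ε : {e : ℝ // 0 < e}, gdirEps f u c v ε.1

/-- The Campa–Degiovanni subdifferential `∂f(u)`. -/
def subdiff (f : X → EReal) (u : X) (c : ℝ) : Set (X →L[ℝ] ℝ) :=
  {α | ∀ v : X, ((α v : ℝ) : EReal) ≤ gdir f u c v}

/-- Auxiliary: `r` is an admissible rate for all `ε`. -/
def coneC (f : X → EReal) (u : X) (c : ℝ) (v : X) (r : ℝ) : Prop :=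
  ∀ ε > 0, r ∈ gdirSetN f u c v ε

lemma epiBallM_mono (f : X → EReal) (u : X) (c : ℝ) {a b : ℝ} (h : a ≤ b) :
    epiBallM f u c a ⊆ epiBallM f u c b := fun _ hw => ⟨hw.1.trans_le h, hw.2⟩

lemma epiBallM_bounds {f : X → EReal} {u : X} {c σ : ℝ} {w : X × ℝ}
    (hw : w ∈ epiBallM f u c σ) : dist w.1 u < σ ∧ |w.2 - c| < σ := by
  constructor
  · refine lt_of_le_of_lt ?_ hw.1
    apply Real.le_sqrt_of_sq_le
    nlinarith [sq_nonneg (w.2 - c)]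
  · refine lt_of_le_of_lt ?_ hw.1
    apply Real.le_sqrt_of_sq_le
    rw [sq_abs]
    nlinarith [sq_nonneg (dist w.1 u)]

lemma epiBallM_of {f : X → EReal} {u : X} {c σ : ℝ} {w : X × ℝ}
    (h : dist w.1 u + |w.2 - c| < σ) (hf : f w.1 ≤ (w.2 : EReal)) :
    w ∈ epiBallM f u c σ := by
  refine ⟨lt_of_le_of_lt ?_ h, hf⟩
  have h1 : 0 ≤ dist w.1 u := dist_nonneg
  have h2 := abs_nonneg (w.2 - c)
  apply Real.sqrt_le_iff.2 ⟨by positivity, ?_⟩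
  rw [← sq_abs (w.2 - c)]
  nlinarith [mul_nonneg h1 h2]

lemma gdirSetN_mono {f : X → EReal} {u : X} {c : ℝ} {v : X} {ε r r' : ℝ}
    (h : r ∈ gdirSetN f u c v ε) (hr : r ≤ r') : r' ∈ gdirSetN f u c v ε := by
  obtain ⟨δ, hδ, ν, hν, H⟩ := h
  refine ⟨δ, hδ, ν, hν, fun w hw t ht => ⟨(H w hw t ht).1, (H w hw t ht).2.trans ?_⟩⟩
  have := mul_le_mul_of_nonneg_right hr ht.1.le
  exact_mod_cast by linarith

lemma coneC_zero (f : X → EReal) (u : X) (c : ℝ) : coneC f u c 0 0 := by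
  intro ε hε
  refine ⟨1, one_pos, fun _ _ => 0, continuousOn_const, fun w hw t ht => ⟨by simpa using hε, ?_⟩⟩
  simpa using hw.2

lemma coneC_smul {f : X → EReal} {u : X} {c : ℝ} {v : X} {r : ℝ}
    (h : coneC f u c v r) {s : ℝ} (hs : 0 < s) : coneC f u c (s • v) (s * r) := by
  intro ε hε
  obtain ⟨δ, hδ, ν, hν, H⟩ := h (ε / s) (by positivity)
  have key : ∀ t ∈ Ioc (0:ℝ) (min δ (δ / s)), s * t ∈ Ioc (0:ℝ) δ := by
    intro t ht
    have h1 : t ≤ δ / s := ht.2.trans (min_le_right _ _)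
    rw [le_div_iff₀ hs] at h1
    exact ⟨mul_pos hs ht.1, by linarith⟩
  refine ⟨min δ (δ / s), by positivity, fun w t => s • ν w (s * t), ?_, ?_⟩
  · refine ContinuousOn.const_smul ?_ s
    refine hν.comp (f := fun z : (X × ℝ) × ℝ => (z.1, s * z.2)) (by fun_prop) ?_
    rintro ⟨w, t⟩ ⟨hw, ht⟩
    exact ⟨epiBallM_mono f u c (min_le_left _ _) hw, key t ht⟩
  · intro w hw t ht
    obtain ⟨h1, h2⟩ := H w (epiBallM_mono f u c (min_le_left _ _) hw) (s * t) (key t ht)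
    constructor
    · rw [← smul_sub, norm_smul, Real.norm_of_nonneg hs.le]
      rw [lt_div_iff₀ hs] at h1
      linarith
    · have e1 : t • s • ν w (s * t) = (s * t) • ν w (s * t) := by rw [smul_smul, mul_comm]
      have e2 : w.2 + s * r * t = w.2 + r * (s * t) := by ring
      simpa only [e1, e2] using h2

lemma coneC_add {f : X → EReal} {u : X} {c : ℝ} {v₁ v₂ : X} {r₁ r₂ : ℝ}
    (h₁ : coneC f u c v₁ r₁) (h₂ : coneC f u c v₂ r₂) :
    coneC f u c (v₁ + v₂) (r₁ + r₂) := by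
  intro ε hε
  obtain ⟨δ₁, hδ₁, ν₁, hν₁, H₁⟩ := h₁ (ε / 2) (by positivity)
  obtain ⟨δ₂, hδ₂, ν₂, hν₂, H₂⟩ := h₂ (ε / 2) (by positivity)
  set M : ℝ := 2 + (‖v₁‖ + ε / 2) + |r₁| with hM
  have hM2 : 1 ≤ M := by
    have := norm_nonneg v₁
    have := abs_nonneg r₁
    linarith
  have hMp : 0 < M := by linarith
  set δ := min δ₁ (δ₂ / M) with hδ
  have hδp : 0 < δ := by positivity
  have hd1 : δ ≤ δ₁ := min_le_left _ _
  have hdM : δ * M ≤ δ₂ := by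
    rw [← le_div_iff₀ hMp]; exact min_le_right _ _
  have hd2 : δ ≤ δ₂ := by nlinarith
  have key : ∀ w ∈ epiBallM f u c δ, ∀ t ∈ Ioc (0:ℝ) δ,
      (w.1 + t • ν₁ w t, w.2 + r₁ * t) ∈ epiBallM f u c δ₂ := by
    intro w hw t ht
    obtain ⟨h1, h2⟩ := H₁ w (epiBallM_mono f u c hd1 hw) t ⟨ht.1, ht.2.trans hd1⟩
    obtain ⟨b1, b2⟩ := epiBallM_bounds hw
    refine epiBallM_of ?_ h2
    have n1 : ‖ν₁ w t‖ ≤ ‖v₁‖ + ε / 2 := by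
      have := norm_sub_norm_le (ν₁ w t) v₁
      linarith
    have n2 : dist (w.1 + t • ν₁ w t) u ≤ dist w.1 u + δ * (‖v₁‖ + ε / 2) := by
      rw [dist_eq_norm, dist_eq_norm, add_sub_right_comm]
      refine (norm_add_le _ _).trans ?_
      rw [norm_smul, Real.norm_of_nonneg ht.1.le]
      gcongr
      exact ht.2
    have n3 : |w.2 + r₁ * t - c| ≤ |w.2 - c| + δ * |r₁| := by
      rw [add_sub_right_comm]
      refine (abs_add_le _ _).trans ?_
      rw [abs_mul, abs_of_pos ht.1, mul_comm]
      gcongr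
      exact ht.2
    have : δ * M = 2 * δ + δ * (‖v₁‖ + ε / 2) + δ * |r₁| := by rw [hM]; ring
    simp only
    linarith
  refine ⟨δ, hδp, fun w t => ν₁ w t + ν₂ (w.1 + t • ν₁ w t, w.2 + r₁ * t) t, ?_, ?_⟩
  · have c1 : ContinuousOn (fun z : (X × ℝ) × ℝ => ν₁ z.1 z.2)
        (epiBallM f u c δ ×ˢ Ioc 0 δ) :=
      hν₁.mono (prod_mono (epiBallM_mono f u c hd1) (Ioc_subset_Ioc_right hd1))
    refine c1.add ?_
    refine hν₂.comp (f := fun z : (X × ℝ) × ℝ =>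
      ((z.1.1 + z.2 • ν₁ z.1 z.2, z.1.2 + r₁ * z.2), z.2)) ?_ ?_
    · refine ContinuousOn.prodMk (ContinuousOn.prodMk ?_ (by fun_prop)) (by fun_prop)
      exact ContinuousOn.add (by fun_prop) (ContinuousOn.smul (by fun_prop) c1)
    · rintro ⟨w, t⟩ ⟨hw, ht⟩
      exact ⟨key w hw t ht, ht.1, ht.2.trans hd2⟩
  · intro w hw t ht
    obtain ⟨h1, -⟩ := H₁ w (epiBallM_mono f u c hd1 hw) t ⟨ht.1, ht.2.trans hd1⟩
    obtain ⟨h3, h4⟩ := H₂ _ (key w hw t ht) t ⟨ht.1, ht.2.trans hd2⟩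
    constructor
    · rw [add_sub_add_comm]
      refine (norm_add_le _ _).trans_lt ?_
      linarith
    · have e2 : w.2 + (r₁ + r₂) * t = w.2 + r₁ * t + r₂ * t := by ring
      rw [smul_add, ← add_assoc, e2]
      exact h4

lemma mem_subdiff_iff {f : X → EReal} {u : X} {c : ℝ} {α : X →L[ℝ] ℝ} :
    α ∈ subdiff f u c ↔ ∀ v r, coneC f u c v r → α v ≤ r := by
  constructor
  · intro h v r hr
    have h1 : gdir f u c v ≤ (r : EReal) :=
      iSup_le fun ε => sInf_le ⟨r, hr ε.1 ε.2, rfl⟩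
    exact_mod_cast (h v).trans h1
  · intro h v
    by_contra hlt
    obtain ⟨r, h1, h2⟩ := EReal.lt_iff_exists_real_btwn.1 (not_le.1 hlt)
    have h3 : coneC f u c v r := by
      intro ε hε
      have : gdirEps f u c v ε < r :=
        lt_of_le_of_lt (le_iSup (fun ε : {e : ℝ // 0 < e} => gdirEps f u c v ε.1) ⟨ε, hε⟩) h1
      obtain ⟨_, ⟨r', hr', rfl⟩, hlt'⟩ := sInf_lt_iff.1 this
      exact gdirSetN_mono hr' (EReal.coe_lt_coe_iff.1 hlt').le
    have h4 := h v r h3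
    have h5 : r < α v := by exact_mod_cast h2
    linarith

lemma gdirSetN_of_regular {f : X → EReal} {u : X} {c δ s ε : ℝ}
    (h : IsDeltaRegular f u c δ) (hs : 0 < s) (hsε : s < ε) :
    -(δ * s) ∈ gdirSetN f u c 0 ε := by
  obtain ⟨σ, hσ, ν, hν, H⟩ := h
  have key : ∀ t ∈ Ioc (0:ℝ) (min σ (σ / s)), s * t ∈ Icc (0:ℝ) σ := by
    intro t ht
    have h1 : t ≤ σ / s := ht.2.trans (min_le_right _ _)
    rw [le_div_iff₀ hs] at h1
    exact ⟨(mul_pos hs ht.1).le, by linarith⟩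
  refine ⟨min σ (σ / s), by positivity, fun w t => t⁻¹ • (ν w (s * t) - w.1), ?_, ?_⟩
  · refine ContinuousOn.smul (ContinuousOn.inv₀ (by fun_prop) ?_) (ContinuousOn.sub ?_ (by fun_prop))
    · rintro ⟨w, t⟩ ⟨hw, ht⟩
      exact ht.1.ne'
    · refine hν.comp (f := fun z : (X × ℝ) × ℝ => (z.1, s * z.2)) (by fun_prop) ?_
      rintro ⟨w, t⟩ ⟨hw, ht⟩
      exact ⟨epiBallM_mono f u c (min_le_left _ _) hw, key t ht⟩
  · intro w hw t ht
    obtain ⟨h1, h2⟩ := H w (epiBallM_mono f u c (min_le_left _ _) hw) (s * t) (key t ht)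
    constructor
    · rw [sub_zero, norm_smul, norm_inv, Real.norm_of_nonneg ht.1.le, ← dist_eq_norm]
      refine lt_of_le_of_lt ?_ hsε
      rw [inv_mul_le_iff₀ ht.1]
      linarith
    · have e1 : w.1 + t • t⁻¹ • (ν w (s * t) - w.1) = ν w (s * t) := by
        rw [smul_inv_smul₀ ht.1.ne']; abel
      have e2 : w.2 + -(δ * s) * t = w.2 - δ * (s * t) := by ring
      rw [e1, e2]
      exact h2

lemma regular_of_gdirSetN {f : X → EReal} {u : X} {c : ℝ} {v : X} {r ε : ℝ} (hε : 0 < ε)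
    (h : r ∈ gdirSetN f u c v ε) : IsDeltaRegular f u c (-r / (‖v‖ + ε)) := by
  obtain ⟨δ, hδ, ν, hν, H⟩ := h
  set M := ‖v‖ + ε with hM
  have hMp : 0 < M := by positivity
  have key : ∀ t, 0 < t → t ≤ min δ (δ * M) → t / M ∈ Ioc (0:ℝ) δ := by
    intro t ht ht'
    refine ⟨by positivity, ?_⟩
    rw [div_le_iff₀ hMp]
    exact ht'.trans (min_le_right _ _)
  have hd : ∀ w ∈ epiBallM f u c (min δ (δ * M)), ∀ t ∈ Icc (0:ℝ) (min δ (δ * M)),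
      dist (w.1 + (t / M) • ν w (t / M)) w.1 ≤ t := by
    intro w hw t ht
    rcases ht.1.eq_or_lt with rfl | htp
    · simp
    obtain ⟨h1, h2⟩ := H w (epiBallM_mono f u c (min_le_left _ _) hw) (t / M) (key t htp ht.2)
    rw [dist_eq_norm, add_sub_cancel_left, norm_smul, Real.norm_of_nonneg (by positivity)]
    have n1 : ‖ν w (t / M)‖ ≤ M := by
      have := norm_sub_norm_le (ν w (t / M)) v
      linarith
    calc t / M * ‖ν w (t / M)‖ ≤ t / M * M := by gcongr
      _ = t := by field_simp
  refine ⟨min δ (δ * M), by positivity, fun w t => w.1 + (t / M) • ν w (t / M), ?_, ?_⟩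
  · rintro ⟨w, t⟩ ⟨hw, ht⟩
    simp only at hw ht
    rcases ht.1.eq_or_lt with rfl | htp
    · have hw1 : ContinuousWithinAt (fun z : (X × ℝ) × ℝ => z.1.1)
          (epiBallM f u c (min δ (δ * M)) ×ˢ Icc 0 (min δ (δ * M))) (w, 0) := by fun_prop
      have ht1 : ContinuousWithinAt (fun z : (X × ℝ) × ℝ => z.2)
          (epiBallM f u c (min δ (δ * M)) ×ˢ Icc 0 (min δ (δ * M))) (w, 0) := by fun_prop
      unfold ContinuousWithinAt at hw1 ht1 ⊢
      simp only [zero_div, zero_smul, add_zero]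
      refine tendsto_of_tendsto_of_dist hw1 ?_
      refine squeeze_zero' (Filter.Eventually.of_forall fun _ => dist_nonneg) ?_ ht1
      filter_upwards [self_mem_nhdsWithin] with z hz
      rw [dist_comm]
      exact hd z.1 hz.1 z.2 hz.2
    · have hc : ContinuousOn (fun z : (X × ℝ) × ℝ => z.1.1 + (z.2 / M) • ν z.1 (z.2 / M))
          (epiBallM f u c (min δ (δ * M)) ×ˢ Ioc 0 (min δ (δ * M))) := by
        refine ContinuousOn.add (by fun_prop) (ContinuousOn.smul (by fun_prop) ?_)
        refine hν.comp (f := fun z : (X × ℝ) × ℝ => (z.1, z.2 / M)) (by fun_prop) ?_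
        rintro ⟨w, t⟩ ⟨hw, ht⟩
        exact ⟨epiBallM_mono f u c (min_le_left _ _) hw, key t ht.1 ht.2⟩
      refine (hc (w, t) ⟨hw, htp, ht.2⟩).mono_of_mem_nhdsWithin ?_
      have ho : (Set.univ ×ˢ Ioi (0:ℝ) : Set ((X × ℝ) × ℝ)) ∈ nhds (w, t) :=
        (isOpen_univ.prod isOpen_Ioi).mem_nhds ⟨mem_univ _, htp⟩
      filter_upwards [self_mem_nhdsWithin, mem_nhdsWithin_of_mem_nhds ho] with z hz hz'
      exact ⟨hz.1, hz'.2, hz.2.2⟩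
  · intro w hw t ht
    refine ⟨hd w hw t ht, ?_⟩
    rcases ht.1.eq_or_lt with rfl | htp
    · simpa using hw.2
    obtain ⟨h1, h2⟩ := H w (epiBallM_mono f u c (min_le_left _ _) hw) (t / M) (key t htp ht.2)
    have e : w.2 - -r / M * t = w.2 + r * (t / M) := by ring
    rw [e]
    exact h2

/-- Sandwich theorem. -/
lemma exists_subdiff {f : X → EReal} {u : X} {c : ℝ} {K : ℝ} (hK : 0 ≤ K)
    (h : ∀ v r, coneC f u c v r → 0 ≤ r + K * ‖v‖) :
    ∃ α ∈ subdiff f u c, ‖α‖ ≤ K := by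
  let S : X → Set ℝ := fun x => {y | ∃ v r, coneC f u c v r ∧ y = r + K * ‖x - v‖}
  have hne : ∀ x, (S x).Nonempty := fun x => ⟨_, 0, 0, coneC_zero f u c, rfl⟩
  have hbd : ∀ x, BddBelow (S x) := by
    intro x
    refine ⟨-(K * ‖x‖), ?_⟩
    rintro _ ⟨v, r, hv, rfl⟩
    have h1 := h v r hv
    have h2 : ‖v‖ ≤ ‖x - v‖ + ‖x‖ := by
      have := norm_sub_norm_le v x
      rw [norm_sub_rev] at this
      linarith
    nlinarith [mul_le_mul_of_nonneg_left h2 hK]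
  have hle : ∀ x v r, coneC f u c v r → sInf (S x) ≤ r + K * ‖x - v‖ :=
    fun x v r hv => csInf_le (hbd x) ⟨v, r, hv, rfl⟩
  have hhom : ∀ s : ℝ, 0 < s → ∀ x, sInf (S (s • x)) ≤ s * sInf (S x) := by
    intro s hs x
    rw [← div_le_iff₀' hs]
    refine le_csInf (hne x) ?_
    rintro _ ⟨v, r, hv, rfl⟩
    rw [div_le_iff₀' hs]
    refine (hle (s • x) _ _ (coneC_smul hv hs)).trans (le_of_eq ?_)
    rw [← smul_sub, norm_smul, Real.norm_of_nonneg hs.le]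
    ring
  obtain ⟨g, -, hg⟩ := exists_extension_of_le_sublinear (⟨⊥, 0⟩ : X →ₗ.[ℝ] ℝ)
    (fun x => sInf (S x)) (by
      intro s hs x
      refine le_antisymm (hhom s hs x) ?_
      have := hhom s⁻¹ (inv_pos.2 hs) (s • x)
      rw [inv_smul_smul₀ hs.ne'] at this
      rwa [← div_eq_inv_mul, le_div_iff₀' hs] at this) (by
      intro x y
      rw [← sub_le_iff_le_add']
      refine le_csInf (hne y) ?_
      rintro _ ⟨v, r, hv, rfl⟩
      rw [sub_le_comm]
      refine le_csInf (hne x) ?_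
      rintro _ ⟨v', r', hv', rfl⟩
      have h1 := hle (x + y) _ _ (coneC_add hv' hv)
      rw [add_sub_add_comm] at h1
      have h2 := mul_le_mul_of_nonneg_left (norm_add_le (x - v') (y - v)) hK
      linarith) (by
      rintro ⟨x, hx⟩
      have hx0 : x = 0 := by simpa using hx
      subst hx0
      refine le_csInf (hne _) ?_
      rintro _ ⟨v, r, hv, rfl⟩
      simpa using h v r hv)
  have hgK : ∀ x, g x ≤ K * ‖x‖ := by
    intro x
    have := (hg x).trans (hle x 0 0 (coneC_zero f u c))
    simpa using this
  have hgK' : ∀ x, ‖g x‖ ≤ K * ‖x‖ := by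
    intro x
    rw [Real.norm_eq_abs, abs_le]
    have := hgK (-x)
    rw [map_neg, norm_neg] at this
    exact ⟨by linarith, hgK x⟩
  refine ⟨g.mkContinuous K hgK', mem_subdiff_iff.2 ?_, g.mkContinuous_norm_le hK hgK'⟩
  intro v r hv
  have := (hg v).trans (hle v v r hv)
  simpa using this

lemma slope_bound {f : X → EReal} {u : X} {c : ℝ} (hfin : weakSlope f u c < ⊤) (v : X) (r : ℝ)
    (hv : coneC f u c v r) : 0 ≤ r + (weakSlope f u c).toReal * ‖v‖ := by
  set K := (weakSlope f u c).toReal with hKdef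
  have hK : 0 ≤ K := ENNReal.toReal_nonneg
  by_contra hneg
  push Not at hneg
  set η := -(r + K * ‖v‖) with hη
  have hηp : 0 < η := by linarith
  set ε := η / (2 * (K + 1)) with hε
  have hεp : 0 < ε := by positivity
  have hεK : ε * (2 * (K + 1)) = η := by rw [hε]; field_simp
  have hM : 0 < ‖v‖ + ε := by positivity
  have hlt : K < -r / (‖v‖ + ε) := by
    rw [lt_div_iff₀ hM]
    nlinarith
  have hreg := regular_of_gdirSetN hεp (hv ε hεp)
  have h1 : ENNReal.ofReal (-r / (‖v‖ + ε)) ≤ weakSlope f u c :=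
    le_sSup ⟨_, by linarith, hreg, rfl⟩
  have h2 := (ENNReal.ofReal_le_iff_le_toReal hfin.ne).1 h1
  linarith

/-- Campa–Degiovanni / Proposition 1.  Let `X` be a normed space,
`f : X → ℝ ∪ {−∞,+∞}` and `u ∈ X` with `f u = c ∈ ℝ`.  Then
(a) the weak slope `|df|(u)` is finite iff `∂f(u) ≠ ∅`;
(b) if `|df|(u) < +∞` then `|df|(u) ≥ min{‖α‖ : α ∈ ∂f(u)}` (the minimum being attained). -/
theorem weakSlope_finite_iff_subdiff_nonempty_and_ge_min
    (f : X → EReal) (u : X) (c : ℝ) (hc : f u = (c : EReal)) :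
    (weakSlope f u c < ⊤ ↔ (subdiff f u c).Nonempty) ∧
    (weakSlope f u c < ⊤ →
      ∃ α ∈ subdiff f u c, (∀ β ∈ subdiff f u c, ‖α‖ ≤ ‖β‖) ∧
        ENNReal.ofReal ‖α‖ ≤ weakSlope f u c) := by
  have hB : weakSlope f u c < ⊤ →
      ∃ α ∈ subdiff f u c, (∀ β ∈ subdiff f u c, ‖α‖ ≤ ‖β‖) ∧
        ENNReal.ofReal ‖α‖ ≤ weakSlope f u c := by
    intro hfin
    obtain ⟨α₀, hα₀, hα₀K⟩ := exists_subdiff ENNReal.toReal_nonneg (slope_bound hfin)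
    set T : Set ℝ := (fun β : X →L[ℝ] ℝ => ‖β‖) '' subdiff f u c with hT
    have hTne : T.Nonempty := ⟨_, α₀, hα₀, rfl⟩
    have hT0 : ∀ y ∈ T, 0 ≤ y := by
      rintro _ ⟨β, -, rfl⟩
      exact norm_nonneg β
    have hTb : BddBelow T := ⟨0, hT0⟩
    obtain ⟨α, hα, hαm⟩ := exists_subdiff (f := f) (u := u) (c := c) (K := sInf T)
      (le_csInf hTne hT0) (by
        intro v r hv
        by_cases hv0 : ‖v‖ = 0
        · have := mem_subdiff_iff.1 hα₀ v r hv
          rw [norm_eq_zero.1 hv0, map_zero] at this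
          simpa [hv0] using this
        have hvp : 0 < ‖v‖ := lt_of_le_of_ne (norm_nonneg v) (Ne.symm hv0)
        have : -r / ‖v‖ ≤ sInf T := by
          refine le_csInf hTne ?_
          rintro _ ⟨β, hβ, rfl⟩
          rw [div_le_iff₀ hvp]
          have h1 := mem_subdiff_iff.1 hβ v r hv
          have h2 := (abs_le.1 (β.le_opNorm v)).1
          linarith
        rw [div_le_iff₀ hvp] at this
        linarith)
    have hmin : ∀ β ∈ subdiff f u c, ‖α‖ ≤ ‖β‖ :=
      fun β hβ => hαm.trans (csInf_le hTb ⟨β, hβ, rfl⟩)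
    refine ⟨α, hα, hmin, ?_⟩
    rw [ENNReal.ofReal_le_iff_le_toReal hfin.ne]
    exact (hmin α₀ hα₀).trans hα₀K
  refine ⟨⟨fun h => ?_, ?_⟩, hB⟩
  · obtain ⟨α, hα, -⟩ := hB h
    exact ⟨α, hα⟩
  · rintro ⟨α, hα⟩
    by_contra hinf
    have htop : weakSlope f u c = ⊤ := not_lt_top_iff.1 hinf
    have hcone : coneC f u c 0 (-1) := by
      intro ε hε
      have hlt : ENNReal.ofReal (2 / ε) < weakSlope f u c := by
        rw [htop]; exact ENNReal.ofReal_lt_top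
      obtain ⟨_, ⟨δ, hδ, hreg, rfl⟩, hlt'⟩ := lt_sSup_iff.1 hlt
      have h1 : 2 / ε < δ := (ENNReal.ofReal_lt_ofReal_iff hδ).1 hlt'
      rw [div_lt_iff₀ hε] at h1
      exact gdirSetN_mono (gdirSetN_of_regular hreg (half_pos hε) (half_lt_self hε)) (by linarith)
    have := mem_subdiff_iff.1 hα 0 (-1) hcone
    rw [map_zero] at this
    linarith
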